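/- Let n ≥ 2 and k ≥ 0, and let e_1, …, e_{h_k} be an orthonormal basis of the space H_k of spherical harmonics of degree k with respect to the inner product (f,g) = ∫_{S^{n−1}} f(x) conj(g(x)) dω(x). Then there is a constant α_k > 0 such that for all x, y ∈ S^{n−1}: Σ_{l=1}^{h_k} e_l(x) conj(e_l(y)) = α_k · P_k^{(α,α)}(x·y), where α = (n−3)/2 and P_k^{(α,α)} is the normalized Jacobi polynomial of degree k (the addition formula). In particular the left-hand side depends only on the inner product x·y and is independent of the chosen orthonormal basis. -/

import Mathlib

open MvPolynomial MeasureTheory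
open scoped ComplexConjugate RealInnerProductSpace

/-- The Laplace operator `Δ = ∑ i ∂²/∂x_i²` on polynomials in `n` variables. -/
noncomputable def polyLaplacian (n : ℕ) :
    MvPolynomial (Fin n) ℂ →ₗ[ℂ] MvPolynomial (Fin n) ℂ :=
  ∑ i : Fin n, ((pderiv i).toLinearMap ∘ₗ (pderiv i).toLinearMap)

/-- `Harm_k`: the space of harmonic homogeneous polynomials of degree `k`. -/
noncomputable def harmSubmodule (n k : ℕ) : Submodule ℂ (MvPolynomial (Fin n) ℂ) :=
  homogeneousSubmodule (Fin n) ℂ k ⊓ LinearMap.ker (polyLaplacian n)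

/-- Restriction of polynomials to functions on the unit sphere `S^{n-1}`. -/
noncomputable def restrictSphere (n : ℕ) :
    MvPolynomial (Fin n) ℂ →ₗ[ℂ]
      ((Metric.sphere (0 : EuclideanSpace ℝ (Fin n)) 1) → ℂ) :=
  LinearMap.pi fun p =>
    (aeval fun i : Fin n => (((p : EuclideanSpace ℝ (Fin n)) i : ℝ) : ℂ)).toLinearMap

/-- `H_k ⊆ C(S^{n-1})`: the spherical harmonics of degree `k`. -/
noncomputable def sphereHarm (n k : ℕ) :
    Submodule ℂ ((Metric.sphere (0 : EuclideanSpace ℝ (Fin n)) 1) → ℂ) :=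
  (harmSubmodule n k).map (restrictSphere n)

/-!
By basis independence, the reproducing kernel `K(x, y) = ∑ l, e_l(x) conj(e_l(y))` of `H_k` is
invariant under rotations, so it depends only on `⟪x, y⟫`. Fixing `y` to be a coordinate vector,
`K(·, y)` is the restriction of a harmonic polynomial of the form `∑ j, a_j |x|^(2j) x₀^(k-2j)`.
On the sphere, harmonicity of this polynomial says precisely that `P(t) = ∑ j, a_j t^(k-2j)` is an
eigenfunction of the Gegenbauer operator for the eigenvalue `k (k + n - 2)`. That operator is
symmetric for the weight `(1 - t²)^((n-3)/2)` and its eigenvalues on distinct degrees are distinct,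
so `P` is a multiple of the Jacobi polynomial; the multiple `P(1) = K(y, y)` is positive because
`H_k` contains `(x₀ + i x₁)ᵏ`.
-/

/-! ### The Gegenbauer operator -/

/-- The eigenvalue `k (k + 2α + 1)` of `gegenbauerOp α` on polynomials of degree `k`. -/
def gegenbauerEigenvalue (α : ℝ) (k : ℕ) : ℝ :=
  k * (k + 2 * α + 1)

/-- The Gegenbauer operator `P ↦ (2α + 2) X P' - (1 - X²) P''`, whose eigenfunctions are the Jacobi
polynomials `P_k^{(α,α)}`. The sign makes its eigenvalues nonnegative for `α > -1`. -/
noncomputable def gegenbauerOp (α : ℝ) : Polynomial ℝ →ₗ[ℝ] Polynomial ℝ :=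
  (2 * α + 2) • LinearMap.mulLeft ℝ .X ∘ₗ Polynomial.derivative
    - LinearMap.mulLeft ℝ (1 - .X ^ 2) ∘ₗ Polynomial.derivative ∘ₗ Polynomial.derivative

lemma gegenbauerOp_apply (α : ℝ) (P : Polynomial ℝ) :
    gegenbauerOp α P = (2 * α + 2) • (.X * P.derivative)
      - (1 - .X ^ 2) * P.derivative.derivative := rfl

lemma coeff_gegenbauerOp (α : ℝ) (P : Polynomial ℝ) (d : ℕ) :
    (gegenbauerOp α P).coeff d =
      gegenbauerEigenvalue α d * P.coeff d - (d + 2) * (d + 1) * P.coeff (d + 2) := by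
  rw [gegenbauerOp_apply, gegenbauerEigenvalue]
  rcases d with _ | _ | d <;>
    simp [sub_mul, mul_assoc, pow_two, Polynomial.coeff_derivative] <;> ring

lemma gegenbauerOp_X_pow (α : ℝ) (a : ℕ) :
    gegenbauerOp α (.X ^ a) = gegenbauerEigenvalue α a • .X ^ a
      - (a * (a - 1) : ℝ) • .X ^ (a - 2) := by
  rw [gegenbauerOp_apply, gegenbauerEigenvalue]
  rcases a with _ | _ | a <;> simp [Polynomial.smul_eq_C_mul, map_ofNat] <;> ring

lemma strictMono_gegenbauerEigenvalue {α : ℝ} (hα : -1 < α) :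
    StrictMono (gegenbauerEigenvalue α) := by
  refine strictMono_nat_of_lt_succ fun k => ?_
  simp only [gegenbauerEigenvalue, Nat.cast_succ]
  linarith [k.cast_nonneg (α := ℝ)]

lemma degree_eq_of_gegenbauerOp_eq_smul {α : ℝ} (hα : -1 < α) {k : ℕ} {P : Polynomial ℝ}
    (hP : gegenbauerOp α P = gegenbauerEigenvalue α k • P) (hP₀ : P ≠ 0) : P.degree = k := by
  have hlead := congr_arg (Polynomial.coeff · P.natDegree) hP
  simp only [coeff_gegenbauerOp, Polynomial.coeff_smul, smul_eq_mul,
    P.coeff_eq_zero_of_natDegree_lt (n := P.natDegree + 2) (by lia), mul_zero, sub_zero] at hlead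
  have heig := mul_right_cancel₀ (Polynomial.leadingCoeff_ne_zero.mpr hP₀) hlead
  rw [Polynomial.degree_eq_natDegree hP₀, (strictMono_gegenbauerEigenvalue hα).injective heig]

lemma degree_gegenbauerOp_sub_lt (α : ℝ) {m : ℕ} {Q : Polynomial ℝ} (hQ : Q.degree < (m + 1 : ℕ)) :
    (gegenbauerOp α Q - gegenbauerEigenvalue α m • Q).degree < m := by
  rw [Polynomial.degree_lt_iff_coeff_zero] at hQ ⊢
  intro d hd
  rw [Polynomial.coeff_sub, Polynomial.coeff_smul, coeff_gegenbauerOp, hQ (d + 2) (by lia)]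
  obtain rfl | hd := hd.eq_or_lt
  · simp
  · simp [hQ d hd]

lemma intervalIntegrable_one_sub_sq_rpow {α : ℝ} (hα : -1 < α) :
    IntervalIntegrable (fun t : ℝ => (1 - t ^ 2) ^ α) volume (-1) 1 := by
  have hright : IntervalIntegrable (fun t : ℝ => (1 - t ^ 2) ^ α) volume 0 1 := by
    have hsub : IntervalIntegrable (fun t : ℝ => (1 - t) ^ α) volume 0 1 := by
      simpa using (intervalIntegral.intervalIntegrable_rpow' hα (a := 1) (b := 0)).comp_sub_left 1
    have hadd : ContinuousOn (fun t : ℝ => (1 + t) ^ α) (Set.uIcc 0 1) :=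
      ContinuousOn.rpow_const (by fun_prop) fun t ht => Or.inl (by simp at ht; linarith)
    refine (hsub.mul_continuousOn hadd).congr fun t ht => ?_
    simp only [zero_le_one, Set.uIoc_of_le, Set.mem_Ioc] at ht
    rw [← Real.mul_rpow (by linarith) (by linarith)]
    ring_nf
  refine IntervalIntegrable.trans (b := 0) ?_ hright
  simpa using ((IntervalIntegrable.iff_comp_neg).mp hright).symm

lemma intervalIntegrable_eval_mul_one_sub_sq_rpow {α : ℝ} (hα : -1 < α) (P : Polynomial ℝ) :
    IntervalIntegrable (fun t => P.eval t * (1 - t ^ 2) ^ α) volume (-1) 1 :=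
  (intervalIntegrable_one_sub_sq_rpow hα).continuousOn_mul P.continuous.continuousOn

/-- Integration against the Jacobi weight `(1 - t²)^α` on `[-1, 1]`, as a linear functional on
polynomials. The hypothesis `-1 < α` is what makes the weight integrable, hence the integral
additive. -/
noncomputable def jacobiIntegral {α : ℝ} (hα : -1 < α) : Polynomial ℝ →ₗ[ℝ] ℝ where
  toFun P := ∫ t in (-1 : ℝ)..1, P.eval t * (1 - t ^ 2) ^ α
  map_add' P Q := by
    simp only [Polynomial.eval_add, add_mul]
    exact intervalIntegral.integral_add (intervalIntegrable_eval_mul_one_sub_sq_rpow hα P)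
      (intervalIntegrable_eval_mul_one_sub_sq_rpow hα Q)
  map_smul' c P := by
    simp [mul_assoc]

lemma jacobiIntegral_apply {α : ℝ} (hα : -1 < α) (P : Polynomial ℝ) :
    jacobiIntegral hα P = ∫ t in (-1 : ℝ)..1, P.eval t * (1 - t ^ 2) ^ α := rfl

lemma hasDerivAt_one_sub_sq_rpow_mul_wronskian (α : ℝ) (P Q : Polynomial ℝ) {t : ℝ}
    (ht : t ∈ Set.Ioo (-1) 1) :
    HasDerivAt (fun t => (1 - t ^ 2) ^ (α + 1)
        * (P * Q.derivative - P.derivative * Q).eval t)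
      ((gegenbauerOp α P * Q - P * gegenbauerOp α Q).eval t * (1 - t ^ 2) ^ α) t := by
  have hpos : 0 < 1 - t ^ 2 := by nlinarith [ht.1, ht.2]
  have hbase : HasDerivAt (fun t : ℝ => 1 - t ^ 2) (-(2 * t)) t := by
    simpa using (hasDerivAt_pow 2 t).const_sub 1
  have hweight : HasDerivAt (fun t : ℝ => (1 - t ^ 2) ^ (α + 1))
      (-(2 * t) * (α + 1) * (1 - t ^ 2) ^ α) t := by
    simpa using hbase.rpow_const (p := α + 1) (Or.inl hpos.ne')
  refine (hweight.mul (Polynomial.hasDerivAt _ t)).congr_deriv ?_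
  rw [Real.rpow_add_one hpos.ne']
  simp [gegenbauerOp_apply]
  ring

lemma jacobiIntegral_gegenbauerOp_mul {α : ℝ} (hα : -1 < α) (P Q : Polynomial ℝ) :
    jacobiIntegral hα (gegenbauerOp α P * Q) = jacobiIntegral hα (P * gegenbauerOp α Q) := by
  rw [← sub_eq_zero, ← map_sub, jacobiIntegral_apply,
    intervalIntegral.integral_eq_sub_of_hasDerivAt_of_le (by norm_num) ?_
      (fun t ht => hasDerivAt_one_sub_sq_rpow_mul_wronskian α P Q ht)
      (intervalIntegrable_eval_mul_one_sub_sq_rpow hα _)]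
  · simp [Real.zero_rpow (show α + 1 ≠ 0 by linarith)]
  · refine (Continuous.mul (Continuous.rpow_const (by fun_prop) fun _ => Or.inr ?_)
      (Polynomial.continuous _)).continuousOn
    linarith

lemma jacobiIntegral_mul_eq_zero {α : ℝ} (hα : -1 < α) {k : ℕ} {P : Polynomial ℝ}
    (hP : gegenbauerOp α P = gegenbauerEigenvalue α k • P) {Q : Polynomial ℝ} (hQ : Q.degree < k) :
    jacobiIntegral hα (P * Q) = 0 := by
  suffices h : ∀ m ≤ k, ∀ Q : Polynomial ℝ, Q.degree < m → jacobiIntegral hα (P * Q) = 0 from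
    h k le_rfl Q hQ
  intro m hm
  induction m with
  | zero =>
    intro Q hQ
    simp [Polynomial.degree_eq_bot.mp (Nat.WithBot.lt_zero_iff.mp hQ)]
  | succ m ih =>
    intro Q hQ
    have hlower := ih (by lia) _ (degree_gegenbauerOp_sub_lt α hQ)
    have hsymm := jacobiIntegral_gegenbauerOp_mul hα P Q
    rw [mul_sub, map_sub, ← hsymm, hP, smul_mul_assoc, mul_smul_comm, map_smul, map_smul,
      ← sub_smul, smul_eq_zero, sub_eq_zero] at hlower
    exact hlower.resolve_left ((strictMono_gegenbauerEigenvalue hα).injective.ne (by lia))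

/-! ### Reproducing kernels -/

section ReproducingKernel

variable {X ι κ : Type*}

section Kernel

variable [Fintype ι]

/-- The reproducing kernel `(x, y) ↦ ∑ l, e_l(x) conj(e_l(y))` of a finite family of functions. -/
def reproducingKernel (e : ι → X → ℂ) (x y : X) : ℂ :=
  ∑ l, e l x * conj (e l y)

lemma conj_reproducingKernel (e : ι → X → ℂ) (x y : X) :
    conj (reproducingKernel e x y) = reproducingKernel e y x := by
  simp [reproducingKernel, mul_comm]

lemma reproducingKernel_mem_span (e : ι → X → ℂ) (y : X) :
    (reproducingKernel e · y) ∈ Submodule.span ℂ (Set.range e) := by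
  refine (Submodule.mem_span_range_iff_exists_fun ℂ).mpr ⟨fun l => conj (e l y), ?_⟩
  ext x
  simp [reproducingKernel, mul_comm]

lemma reproducingKernel_self (e : ι → X → ℂ) (x : X) :
    reproducingKernel e x x = (∑ l, ‖e l x‖ ^ 2 : ℝ) := by
  simp [reproducingKernel, Complex.mul_conj']

lemma sum_norm_sq_pos_of_mem_span {e : ι → X → ℂ} {x : X} {f : X → ℂ}
    (hf : f ∈ Submodule.span ℂ (Set.range e)) (hfx : f x ≠ 0) : 0 < ∑ l, ‖e l x‖ ^ 2 := by
  obtain ⟨c, rfl⟩ := (Submodule.mem_span_range_iff_exists_fun ℂ).mp hf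
  obtain ⟨l, hl⟩ : ∃ l, e l x ≠ 0 := by
    contrapose! hfx
    simp [hfx]
  exact Finset.sum_pos' (fun _ _ => by positivity) ⟨l, Finset.mem_univ l, by positivity⟩

end Kernel

variable [DecidableEq ι] [DecidableEq κ] [MeasurableSpace X]

/-- Orthonormality of a family of functions in `L²(μ)`, for the inner product `∫ f conj(g) ∂μ`. -/
structure IsL2Orthonormal (μ : Measure X) (e : ι → X → ℂ) : Prop where
  aestronglyMeasurable (l : ι) : AEStronglyMeasurable (e l) μ
  integral_mul_conj (l m : ι) : ∫ p, e l p * conj (e m p) ∂μ = if l = m then 1 else 0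

variable {μ : Measure X} {e : ι → X → ℂ} {f : κ → X → ℂ}

namespace IsL2Orthonormal

lemma memLp (he : IsL2Orthonormal μ e) (l : ι) : MemLp (e l) 2 μ := by
  have hint : Integrable (fun p => e l p * conj (e l p)) μ :=
    Integrable.of_integral_ne_zero (by simp [he.integral_mul_conj])
  rw [memLp_two_iff_integrable_sq_norm (he.aestronglyMeasurable l)]
  simpa [pow_two] using hint.norm

lemma integrable_mul_conj (he : IsL2Orthonormal μ e) (l m : ι) :
    Integrable (fun p => e l p * conj (e m p)) μ :=
  (he.memLp l).integrable_mul (he.memLp m).star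

lemma comp_measurePreserving (he : IsL2Orthonormal μ e) {T : X ≃ᵐ X}
    (hT : MeasurePreserving T μ μ) : IsL2Orthonormal μ fun l => e l ∘ T where
  aestronglyMeasurable l := (he.aestronglyMeasurable l).comp_measurePreserving hT
  integral_mul_conj l m :=
    (hT.integral_comp' fun p => e l p * conj (e m p)).trans (he.integral_mul_conj l m)

variable [Fintype ι] [Fintype κ]

lemma eq_sum_of_mem_span (he : IsL2Orthonormal μ e) {g : X → ℂ}
    (hg : g ∈ Submodule.span ℂ (Set.range e)) (x : X) :
    g x = ∑ l, (∫ p, g p * conj (e l p) ∂μ) * e l x := by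
  obtain ⟨c, rfl⟩ := (Submodule.mem_span_range_iff_exists_fun ℂ).mp hg
  have hcoeff (l : ι) : ∫ p, (∑ m, c m • e m) p * conj (e l p) ∂μ = c l := by
    simp only [Finset.sum_apply, Pi.smul_apply, smul_eq_mul, Finset.sum_mul, mul_assoc]
    rw [integral_finsetSum _ fun m _ => (he.integrable_mul_conj m l).const_mul (c m)]
    simp [integral_const_mul, he.integral_mul_conj]
  simp only [hcoeff]
  simp

lemma reproducingKernel_eq (he : IsL2Orthonormal μ e) (hf : IsL2Orthonormal μ f)
    (hspan : Submodule.span ℂ (Set.range e) = Submodule.span ℂ (Set.range f)) (x y : X) :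
    reproducingKernel e x y = reproducingKernel f x y := by
  have he_mem (l : ι) : e l ∈ Submodule.span ℂ (Set.range f) :=
    hspan ▸ Submodule.subset_span ⟨l, rfl⟩
  have hf_mem (m : κ) : f m ∈ Submodule.span ℂ (Set.range e) :=
    hspan ▸ Submodule.subset_span ⟨m, rfl⟩
  have hconj (l : ι) (m : κ) :
      ∫ p, e l p * conj (f m p) ∂μ = conj (∫ p, f m p * conj (e l p) ∂μ) := by
    simp [← integral_conj, mul_comm]
  calc reproducingKernel e x y
      = ∑ l, (∑ m, (∫ p, e l p * conj (f m p) ∂μ) * f m x) * conj (e l y) :=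
        Finset.sum_congr rfl fun l _ => by rw [← hf.eq_sum_of_mem_span (he_mem l)]
    _ = ∑ m, f m x * conj (∑ l, (∫ p, f m p * conj (e l p) ∂μ) * e l y) := by
        simp only [Finset.sum_mul, map_sum, Finset.mul_sum, map_mul, hconj]
        rw [Finset.sum_comm]
        exact Finset.sum_congr rfl fun _ _ => Finset.sum_congr rfl fun _ _ => by ring
    _ = reproducingKernel f x y :=
        Finset.sum_congr rfl fun m _ => by rw [← he.eq_sum_of_mem_span (hf_mem m)]

lemma reproducingKernel_apply_apply (he : IsL2Orthonormal μ e) {T : X ≃ᵐ X}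
    (hT : MeasurePreserving T μ μ) (hspan : (Submodule.span ℂ (Set.range e)).map
      (LinearMap.funLeft ℂ ℂ T) = Submodule.span ℂ (Set.range e)) (x y : X) :
    reproducingKernel e (T x) (T y) = reproducingKernel e x y := by
  refine (he.comp_measurePreserving hT).reproducingKernel_eq he ?_ x y
  rw [← hspan, Submodule.map_span, ← Set.range_comp]
  rfl

end IsL2Orthonormal

end ReproducingKernel

section RotationInvariant

/-- The isometry of the unit sphere induced by a linear isometry of the ambient space. -/
def sphereIsometry {E : Type*} [NormedAddCommGroup E] [NormedSpace ℝ E] (g : E ≃ₗᵢ[ℝ] E) :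
    Metric.sphere (0 : E) 1 ≃ᵢ Metric.sphere (0 : E) 1 where
  toFun x := ⟨g x, by simp⟩
  invFun x := ⟨g.symm x, by simp⟩
  left_inv x := by simp
  right_inv x := by simp
  isometry_toFun x y := g.isometry x y

variable {E : Type*} [NormedAddCommGroup E] [InnerProductSpace ℝ E]

lemma sphereIsometry_reflection_sub (u v : Metric.sphere (0 : E) 1) :
    sphereIsometry (ℝ ∙ ((u : E) - v))ᗮ.reflection u = v :=
  Subtype.ext (Submodule.reflection_sub (by simp))

lemma exists_sphereIsometry_apply_eq_of_inner_eq {x y x' y' : Metric.sphere (0 : E) 1}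
    (h : ⟪(x : E), (y : E)⟫ = ⟪(x' : E), (y' : E)⟫) :
    ∃ g : E ≃ₗᵢ[ℝ] E, sphereIsometry g x = x' ∧ sphereIsometry g y = y' := by
  -- The reflection `g₁` maps `y` to `y'`; the reflection `g₂` then corrects `x`, fixing `y'`.
  let g₁ := (ℝ ∙ ((y : E) - y'))ᗮ.reflection
  have hg₁y : sphereIsometry g₁ y = y' := sphereIsometry_reflection_sub y y'
  let z := sphereIsometry g₁ x
  have hzy : ⟪(z : E), (y' : E)⟫ = ⟪(x' : E), (y' : E)⟫ := by
    rw [← h, ← hg₁y]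
    exact g₁.inner_map_map _ _
  let g₂ := (ℝ ∙ ((z : E) - x'))ᗮ.reflection
  have hg₂y' : g₂ y' = (y' : E) := Submodule.reflection_mem_subspace_eq_self <| by
    rw [Submodule.mem_orthogonal_singleton_iff_inner_right, inner_sub_left, hzy, sub_self]
  exact ⟨g₁.trans g₂, sphereIsometry_reflection_sub z x',
    Subtype.ext ((congr_arg g₂ (congr_arg Subtype.val hg₁y)).trans hg₂y')⟩

lemma eq_of_inner_eq {β : Type*} {K : Metric.sphere (0 : E) 1 → Metric.sphere (0 : E) 1 → β}
    (hK : ∀ (g : E ≃ₗᵢ[ℝ] E) x y, K (sphereIsometry g x) (sphereIsometry g y) = K x y)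
    {x y x' y' : Metric.sphere (0 : E) 1} (h : ⟪(x : E), (y : E)⟫ = ⟪(x' : E), (y' : E)⟫) :
    K x y = K x' y' := by
  obtain ⟨g, rfl, rfl⟩ := exists_sphereIsometry_apply_eq_of_inner_eq h
  exact (hK g x y).symm

end RotationInvariant

/-! ### Harmonic polynomials and rotations -/

section SphericalHarmonics

local notation "𝔼" n:max => EuclideanSpace ℝ (Fin n)

/-- The unit sphere `S^{n-1}` of `ℝⁿ`. -/
local notation "𝕊" n:max => Metric.sphere (0 : EuclideanSpace ℝ (Fin n)) 1

variable {n k : ℕ}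

lemma polyLaplacian_apply (F : MvPolynomial (Fin n) ℂ) :
    polyLaplacian n F = ∑ i, pderiv i (pderiv i F) := by
  simp [polyLaplacian, LinearMap.sum_apply]

lemma mem_harmSubmodule {F : MvPolynomial (Fin n) ℂ} :
    F ∈ harmSubmodule n k ↔ F.IsHomogeneous k ∧ polyLaplacian n F = 0 := by
  rw [harmSubmodule, Submodule.mem_inf, mem_homogeneousSubmodule, LinearMap.mem_ker]

lemma polyLaplacian_mul (F G : MvPolynomial (Fin n) ℂ) :
    polyLaplacian n (F * G) = polyLaplacian n F * G + 2 * ∑ i, pderiv i F * pderiv i G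
      + F * polyLaplacian n G := by
  simp only [polyLaplacian_apply, Finset.sum_mul, Finset.mul_sum, ← Finset.sum_add_distrib]
  refine Finset.sum_congr rfl fun i _ => ?_
  simp only [Derivation.leibniz, map_add, smul_eq_mul]
  ring

lemma polyLaplacian_pow (F : MvPolynomial (Fin n) ℂ) (m : ℕ) :
    polyLaplacian n (F ^ m) = (m : ℂ) • (F ^ (m - 1) * polyLaplacian n F)
      + (m * (m - 1) : ℂ) • (F ^ (m - 2) * ∑ i, pderiv i F ^ 2) := by
  simp only [polyLaplacian_apply, Finset.mul_sum, Finset.smul_sum, ← Finset.sum_add_distrib]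
  refine Finset.sum_congr rfl fun i _ => ?_
  rcases m with _ | _ | m
  · simp
  · simp
  · simp [Derivation.leibniz_pow, Derivation.leibniz, smul_eq_C_mul]
    ring

lemma polyLaplacian_X_pow (i : Fin n) (a : ℕ) :
    polyLaplacian n (X i ^ a) = (a * (a - 1) : ℂ) • X i ^ (a - 2) := by
  rw [polyLaplacian_pow]
  simp [polyLaplacian_apply, pderiv_X, Pi.single_apply, apply_ite (pderiv _)]

/-- The polynomial `|x|² = ∑ i, x_i²`. -/
noncomputable def normSqPoly (n : ℕ) : MvPolynomial (Fin n) ℂ :=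
  ∑ i, X i ^ 2

lemma pderiv_normSqPoly (i : Fin n) : pderiv i (normSqPoly n) = 2 * X i := by
  simp [normSqPoly, Derivation.leibniz_pow, pderiv_X, Pi.single_apply]

lemma sum_pderiv_normSqPoly_mul_pderiv {m : ℕ} {G : MvPolynomial (Fin n) ℂ}
    (hG : G.IsHomogeneous m) :
    ∑ i, pderiv i (normSqPoly n) * pderiv i G = (2 * m : ℂ) • G := by
  simp only [pderiv_normSqPoly, mul_assoc, ← Finset.mul_sum, hG.sum_X_mul_pderiv]
  simp [smul_eq_C_mul, map_ofNat, mul_assoc]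

lemma polyLaplacian_normSqPoly : polyLaplacian n (normSqPoly n) = C (2 * n : ℂ) := by
  have htwo (i : Fin n) : pderiv i (2 : MvPolynomial (Fin n) ℂ) = 0 :=
    mod_cast (pderiv (R := ℂ) i).map_natCast 2
  simp [polyLaplacian_apply, pderiv_normSqPoly, Derivation.leibniz, htwo, map_ofNat, mul_comm]

lemma polyLaplacian_normSqPoly_mul {m : ℕ} {G : MvPolynomial (Fin n) ℂ}
    (hG : G.IsHomogeneous m) :
    polyLaplacian n (normSqPoly n * G) =
      (4 * m + 2 * n : ℂ) • G + normSqPoly n * polyLaplacian n G := by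
  rw [polyLaplacian_mul, polyLaplacian_normSqPoly, sum_pderiv_normSqPoly_mul_pderiv hG]
  simp [smul_eq_C_mul, map_ofNat]
  ring

lemma isHomogeneous_normSqPoly : (normSqPoly n).IsHomogeneous 2 :=
  IsHomogeneous.sum _ _ _ fun i _ => by simpa using (isHomogeneous_X ℂ i).pow 2

lemma polyLaplacian_normSqPoly_pow_mul {m : ℕ} {G : MvPolynomial (Fin n) ℂ}
    (hG : G.IsHomogeneous m) (j : ℕ) :
    polyLaplacian n (normSqPoly n ^ j * G) =
      (2 * j * (2 * m + n + 2 * j - 2) : ℂ) • (normSqPoly n ^ (j - 1) * G)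
        + normSqPoly n ^ j * polyLaplacian n G := by
  induction j with
  | zero => simp
  | succ j ih =>
    rw [pow_succ', mul_assoc,
      polyLaplacian_normSqPoly_mul ((isHomogeneous_normSqPoly.pow j).mul hG), ih]
    rcases j with _ | j <;> simp [smul_eq_C_mul, map_ofNat, -mul_eq_mul_right_iff] <;> ring

/-- Evaluation of a complex polynomial at a real vector. -/
noncomputable def realEval (x : 𝔼 n) : MvPolynomial (Fin n) ℂ →ₐ[ℂ] ℂ :=
  aeval fun i => (x i : ℂ)

@[simp]
lemma realEval_X (x : 𝔼 n) (i : Fin n) : realEval x (X i) = x i := by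
  simp [realEval]

@[simp]
lemma realEval_normSqPoly (x : 𝔼 n) : realEval x (normSqPoly n) = (‖x‖ ^ 2 : ℝ) := by
  simp [normSqPoly, EuclideanSpace.real_norm_sq_eq]

lemma restrictSphere_apply (F : MvPolynomial (Fin n) ℂ) (x : 𝕊 n) :
    restrictSphere n F x = realEval (x : 𝔼 n) F := rfl

lemma continuous_realEval (F : MvPolynomial (Fin n) ℂ) :
    Continuous fun x : 𝔼 n => realEval x F := by
  have h := (MvPolynomial.continuous_eval F).comp
    (by fun_prop : Continuous fun (x : 𝔼 n) (i : Fin n) => (x i : ℂ))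
  exact h

lemma realEval_smul {F : MvPolynomial (Fin n) ℂ} (hF : F.IsHomogeneous k) (c : ℝ) (x : 𝔼 n) :
    realEval (c • x) F = c ^ k * realEval x F := by
  simp only [realEval, aeval_eq_eval₂Hom, coe_eval₂Hom, eval₂_eq', Finset.mul_sum]
  refine Finset.sum_congr rfl fun d hd => ?_
  have hdeg : ∑ i, d i = k := by
    rw [← hF (mem_support_iff.mp hd), Finsupp.weight_apply, Finsupp.sum_fintype _ _ (by simp)]
    simp
  simp only [PiLp.smul_apply, smul_eq_mul, Complex.ofReal_mul, mul_pow, Finset.prod_mul_distrib,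
    Finset.prod_pow_eq_pow_sum, hdeg]
  ring

lemma eq_of_realEval_eq {F G : MvPolynomial (Fin n) ℂ}
    (h : ∀ x : 𝔼 n, realEval x F = realEval x G) : F = G := by
  refine MvPolynomial.funext_set (fun _ => Set.range ((↑) : ℝ → ℂ))
    (fun _ => Set.infinite_range_of_injective Complex.ofReal_injective) fun z hz => ?_
  choose x hx using fun i => hz i (Set.mem_univ i)
  obtain rfl : (fun i => (x i : ℂ)) = z := funext hx
  exact h (WithLp.toLp 2 x)

/-- The polynomial `F ∘ g`, for a linear endomorphism `g` of `ℝⁿ`. -/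
noncomputable def compLinear (g : 𝔼 n →ₗ[ℝ] 𝔼 n) :
    MvPolynomial (Fin n) ℂ →ₐ[ℂ] MvPolynomial (Fin n) ℂ :=
  aeval fun i => ∑ j, C (g (EuclideanSpace.single j 1) i : ℂ) * X j

lemma compLinear_X (g : 𝔼 n →ₗ[ℝ] 𝔼 n) (i : Fin n) :
    compLinear g (X i) = ∑ j, C (g (EuclideanSpace.single j 1) i : ℂ) * X j := by
  simp [compLinear]

lemma realEval_compLinear (g : 𝔼 n →ₗ[ℝ] 𝔼 n) (x : 𝔼 n) (F : MvPolynomial (Fin n) ℂ) :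
    realEval x (compLinear g F) = realEval (g x) F := by
  suffices (realEval x).comp (compLinear g) = realEval (g x) from DFunLike.congr_fun this F
  ext i
  have hgx : g x = ∑ j, x j • g (EuclideanSpace.single j 1) := by
    conv_lhs => rw [← (EuclideanSpace.basisFun (Fin n) ℝ).sum_repr x]
    simp
  simp [compLinear_X, realEval, hgx, mul_comm]

lemma pderiv_compLinear (g : 𝔼 n →ₗ[ℝ] 𝔼 n) (j : Fin n) (F : MvPolynomial (Fin n) ℂ) :
    pderiv j (compLinear g F) =
      ∑ i, C (g (EuclideanSpace.single j 1) i : ℂ) * compLinear g (pderiv i F) := by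
  induction F using MvPolynomial.induction_on with
  | C a => simp [compLinear]
  | add p q hp hq => simp [hp, hq, mul_add, Finset.sum_add_distrib]
  | mul_X p i hp =>
    have hX : pderiv j (compLinear g (X i)) = C (g (EuclideanSpace.single j 1) i : ℂ) := by
      simp [compLinear_X, pderiv_X, Pi.single_apply]
    simp only [map_mul, Derivation.leibniz, hp, hX, pderiv_X, smul_eq_mul, map_add, mul_add,
      Finset.sum_add_distrib, Finset.mul_sum]
    congr 1
    · rw [Finset.sum_eq_single i (fun l _ hl => by simp [hl]) (by simp)]
      simp [mul_comm]
    · exact Finset.sum_congr rfl fun _ _ => by ring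

lemma sum_apply_single_mul_apply_single (g : 𝔼 n ≃ₗᵢ[ℝ] 𝔼 n) (i l : Fin n) :
    ∑ j, g (EuclideanSpace.single j 1) i * g (EuclideanSpace.single j 1) l =
      if i = l then 1 else 0 := by
  have hcoord (i j : Fin n) : g (EuclideanSpace.single j 1) i =
      ⟪g.symm (EuclideanSpace.single i 1), EuclideanSpace.basisFun (Fin n) ℝ j⟫ := by
    rw [← g.inner_map_map]
    simp [EuclideanSpace.inner_single_left]
  simp only [hcoord]
  simp_rw [real_inner_comm (EuclideanSpace.basisFun (Fin n) ℝ _) (g.symm (.single l 1))]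
  rw [OrthonormalBasis.sum_inner_mul_inner, g.symm.inner_map_map]
  simp [EuclideanSpace.inner_single_left]

lemma polyLaplacian_compLinear (g : 𝔼 n ≃ₗᵢ[ℝ] 𝔼 n) (F : MvPolynomial (Fin n) ℂ) :
    polyLaplacian n (compLinear g.toLinearMap F) =
      compLinear g.toLinearMap (polyLaplacian n F) := by
  have horth (i l : Fin n) : ∑ j, (C (g (EuclideanSpace.single j 1) i : ℂ)
      * C (g (EuclideanSpace.single j 1) l : ℂ) : MvPolynomial (Fin n) ℂ) =
        if i = l then 1 else 0 := by
    simp_rw [← C_mul, ← Complex.ofReal_mul, ← map_sum, ← Complex.ofReal_sum,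
      sum_apply_single_mul_apply_single]
    split_ifs <;> simp
  simp only [polyLaplacian_apply, pderiv_compLinear, map_sum, Derivation.leibniz, pderiv_C,
    smul_eq_mul, mul_zero, add_zero, Finset.mul_sum]
  rw [Finset.sum_comm]
  refine Finset.sum_congr rfl fun i _ => ?_
  rw [Finset.sum_comm]
  simp only [LinearEquiv.coe_coe, LinearIsometryEquiv.coe_toLinearEquiv]
  simp_rw [← mul_assoc, ← Finset.sum_mul, horth]
  simp

lemma compLinear_mem_harmSubmodule (g : 𝔼 n ≃ₗᵢ[ℝ] 𝔼 n) {F : MvPolynomial (Fin n) ℂ}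
    (hF : F ∈ harmSubmodule n k) : compLinear g.toLinearMap F ∈ harmSubmodule n k := by
  rw [mem_harmSubmodule] at hF ⊢
  refine ⟨?_, by rw [polyLaplacian_compLinear, hF.2, map_zero]⟩
  rw [← one_mul k]
  refine hF.1.aeval _ fun i => IsHomogeneous.sum _ _ _ fun j _ => ?_
  exact isHomogeneous_C_mul_X _ j

lemma comp_sphereIsometry_mem_sphereHarm (g : 𝔼 n ≃ₗᵢ[ℝ] 𝔼 n) {f : 𝕊 n → ℂ}
    (hf : f ∈ sphereHarm n k) : f ∘ sphereIsometry g ∈ sphereHarm n k := by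
  obtain ⟨F, hF, rfl⟩ := hf
  refine ⟨compLinear g.toLinearMap F, compLinear_mem_harmSubmodule g hF, funext fun x => ?_⟩
  rw [Function.comp_apply, restrictSphere_apply, restrictSphere_apply, realEval_compLinear]
  rfl

lemma map_funLeft_sphereIsometry_sphereHarm (g : 𝔼 n ≃ₗᵢ[ℝ] 𝔼 n) :
    (sphereHarm n k).map (LinearMap.funLeft ℂ ℂ (sphereIsometry g)) = sphereHarm n k := by
  refine le_antisymm ?_ fun f hf => ?_
  · rintro _ ⟨f, hf, rfl⟩
    exact comp_sphereIsometry_mem_sphereHarm g hf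
  · exact ⟨_, comp_sphereIsometry_mem_sphereHarm g.symm hf,
      funext fun x => congr_arg f ((sphereIsometry g).symm_apply_apply x)⟩

lemma continuous_of_mem_sphereHarm {f : 𝕊 n → ℂ} (hf : f ∈ sphereHarm n k) : Continuous f := by
  obtain ⟨F, -, rfl⟩ := hf
  exact (continuous_realEval F).comp continuous_subtype_val

/-- `(x₀ + i x₁)ᵏ` is harmonic because the vector `(1, i)` is isotropic. -/
lemma X_add_I_mul_X_pow_mem_harmSubmodule {i₀ i₁ : Fin n} (hi : i₀ ≠ i₁) (k : ℕ) :
    (X i₀ + C Complex.I * X i₁) ^ k ∈ harmSubmodule n k := by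
  let c : Fin n → ℂ := Pi.single i₀ 1 + Pi.single i₁ Complex.I
  have hderiv (i : Fin n) : pderiv i (X i₀ + C Complex.I * X i₁) = C (c i) := by
    simp [c, pderiv_X, Pi.single_apply, apply_ite C, eq_comm]
  have hisotropic : ∑ i, c i ^ 2 = 0 := by
    simp [c, add_sq, Finset.sum_add_distrib, Pi.single_apply, hi.symm]
  refine mem_harmSubmodule.mpr ⟨?_, ?_⟩
  · simpa using ((isHomogeneous_X ℂ i₀).add (isHomogeneous_C_mul_X Complex.I i₁)).pow k
  · rw [polyLaplacian_pow, polyLaplacian_apply]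
    simp only [hderiv, pderiv_C, ← C_pow, ← map_sum, hisotropic]
    simp

lemma reproducingKernel_sphereIsometry {ι : Type*} [Fintype ι] [DecidableEq ι] {d : ℝ}
    {e : ι → 𝕊 n → ℂ} (he : IsL2Orthonormal μH[d] e)
    (hspan : Submodule.span ℂ (Set.range e) = sphereHarm n k) (g : 𝔼 n ≃ₗᵢ[ℝ] 𝔼 n) (x y : 𝕊 n) :
    reproducingKernel e (sphereIsometry g x) (sphereIsometry g y) = reproducingKernel e x y :=
  he.reproducingKernel_apply_apply (T := (sphereIsometry g).toHomeomorph.toMeasurableEquiv)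
    ((sphereIsometry g).measurePreserving_hausdorffMeasure d)
    (hspan ▸ map_funLeft_sphereIsometry_sphereHarm g) x y

/-! ### Zonal harmonics -/

lemma expand_contract_two_of_comp_neg_X_eq {R : Type*} [CommRing R] [IsDomain R] [CharZero R]
    {p : Polynomial R} (hp : p.comp (-.X) = p) :
    Polynomial.expand R 2 (Polynomial.contract 2 p) = p := by
  ext m
  rw [Polynomial.coeff_expand two_pos, Polynomial.coeff_contract two_ne_zero]
  split_ifs with hm
  · rw [Nat.div_mul_cancel hm]
  · have hodd := congr_arg (Polynomial.coeff · m) hp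
    have hneg : (-.X : Polynomial R) = .C (-1) * .X := by simp
    simp only [hneg, Polynomial.comp_C_mul_X_coeff,
      (Nat.not_even_iff_odd.mp (even_iff_two_dvd.not.mpr hm)).neg_one_pow, mul_neg_one] at hodd
    exact (self_eq_neg.mp hodd.symm).symm

lemma norm_single_add_single_sq {i₀ i₁ : Fin n} (hi : i₀ ≠ i₁) (a b : ℝ) :
    ‖(EuclideanSpace.single i₀ a + EuclideanSpace.single i₁ b : 𝔼 n)‖ ^ 2 = a ^ 2 + b ^ 2 := by
  rw [norm_add_sq_real]
  simp [EuclideanSpace.inner_single_left, hi]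

lemma exists_mem_sphere_apply_eq {i₀ i₁ : Fin n} (hi : i₀ ≠ i₁) {t : ℝ} (ht : t ∈ Set.Icc (-1) 1) :
    ∃ x : 𝕊 n, (x : 𝔼 n) i₀ = t := by
  refine ⟨⟨EuclideanSpace.single i₀ t + EuclideanSpace.single i₁ √(1 - t ^ 2), ?_⟩, by simp [hi]⟩
  rw [mem_sphere_zero_iff_norm, ← sq_eq_sq₀ (norm_nonneg _) zero_le_one,
    norm_single_add_single_sq hi, Real.sq_sqrt (by nlinarith [ht.1, ht.2])]
  ring

lemma exists_realEval_single_add_single_eq_eval (i₀ i₁ : Fin n) {F : MvPolynomial (Fin n) ℂ}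
    (hF : F.totalDegree ≤ k) :
    ∃ p : Polynomial ℂ, p.natDegree ≤ k ∧ ∀ b : ℝ,
      realEval (EuclideanSpace.single i₀ 1 + EuclideanSpace.single i₁ b) F = p.eval (b : ℂ) := by
  let f : Fin n → Polynomial ℂ := Pi.single i₀ 1 + Pi.single i₁ .X
  refine ⟨aeval f F, ?_, fun b => ?_⟩
  · refine (aeval_natDegree_le F hF f (n := 1) fun i => ?_).trans_eq (mul_one k)
    simp only [f, Pi.add_apply, Pi.single_apply]
    exact Polynomial.natDegree_add_le_of_degree_le (by split_ifs <;> simp) (by split_ifs <;> simp)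
  · have hcomp : realEval (EuclideanSpace.single i₀ 1 + EuclideanSpace.single i₁ b) =
        (Polynomial.aeval (b : ℂ)).comp (aeval f) := by
      ext i
      simp only [AlgHom.comp_apply, realEval_X, aeval_X, f, Pi.add_apply, PiLp.add_apply,
        PiLp.single_apply, Pi.single_apply]
      split_ifs <;> simp
    rw [hcomp, AlgHom.comp_apply, Polynomial.coe_aeval_eq_eval]

/-- A polynomial is zonal about the `i₀`-th axis if its values on the unit sphere depend only on
the `i₀`-th coordinate. -/
def IsZonal (i₀ : Fin n) (F : MvPolynomial (Fin n) ℂ) : Prop :=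
  ∀ x y : 𝕊 n, (x : 𝔼 n) i₀ = (y : 𝔼 n) i₀ → realEval (x : 𝔼 n) F = realEval (y : 𝔼 n) F

namespace IsZonal

variable {i₀ i₁ : Fin n} {F : MvPolynomial (Fin n) ℂ}

lemma realEval_eq (hF : IsZonal i₀ F) (hF' : F.IsHomogeneous k) {x y : 𝔼 n} (hnorm : ‖x‖ = ‖y‖)
    (hcoord : x i₀ = y i₀) : realEval x F = realEval y F := by
  obtain rfl | hx := eq_or_ne x 0
  · rw [norm_zero] at hnorm
    rw [norm_eq_zero.mp hnorm.symm]
  have hx' : ‖x‖ ≠ 0 := norm_ne_zero_iff.mpr hx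
  have hmem (z : 𝔼 n) (hz : ‖z‖ = ‖x‖) : ‖x‖⁻¹ • z ∈ 𝕊 n := by
    simp [norm_smul, hz, hx']
  have hsphere := hF ⟨_, hmem x rfl⟩ ⟨_, hmem y hnorm.symm⟩ (by simp [hcoord])
  simp only [realEval_smul hF'] at hsphere
  exact mul_left_cancel₀ (by simp [hx']) hsphere

/-- On the affine hyperplane `x_{i₀} = 1`, the value at `x` is that at the point `(1, b)` of the
coordinate plane with `1 + b² = ‖x‖²`. It is even in `b`, hence a polynomial in `b² = ‖x‖² - 1`. -/
lemma exists_realEval_eq_eval_norm_sq (hi : i₀ ≠ i₁) (hF : IsZonal i₀ F)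
    (hF' : F.IsHomogeneous k) :
    ∃ q : Polynomial ℂ, q.natDegree ≤ k / 2 ∧
      ∀ x : 𝔼 n, x i₀ = 1 → realEval x F = q.eval ((‖x‖ ^ 2 : ℝ) : ℂ) := by
  let planePt (b : ℝ) : 𝔼 n := EuclideanSpace.single i₀ 1 + EuclideanSpace.single i₁ b
  have hplanePt (b : ℝ) : planePt b i₀ = 1 := by simp [planePt, hi]
  have hnorm (b : ℝ) : ‖planePt b‖ ^ 2 = 1 + b ^ 2 := by
    simpa using norm_single_add_single_sq hi 1 b
  obtain ⟨p, hdeg, hp⟩ := exists_realEval_single_add_single_eq_eval i₀ i₁ hF'.totalDegree_le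
  have heven : p.comp (-.X) = p := by
    refine Polynomial.eq_of_infinite_eval_eq _ _ ((Set.infinite_range_of_injective
      Complex.ofReal_injective).mono ?_)
    rintro _ ⟨b, rfl⟩
    have hb : realEval (planePt (-b)) F = realEval (planePt b) F := by
      refine hF.realEval_eq hF' ?_ (by simp only [hplanePt])
      rw [← sq_eq_sq₀ (norm_nonneg _) (norm_nonneg _), hnorm, hnorm, neg_sq]
    simpa [planePt, hp] using hb
  let r := Polynomial.contract 2 p
  have hr : Polynomial.expand ℂ 2 r = p := expand_contract_two_of_comp_neg_X_eq heven
  refine ⟨r.comp (.X - .C 1), ?_, fun x hx => ?_⟩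
  · rw [Polynomial.natDegree_comp, Polynomial.natDegree_X_sub_C, mul_one,
      Nat.le_div_iff_mul_le two_pos, ← Polynomial.natDegree_expand, hr]
    exact hdeg
  · have hx_norm : 1 ≤ ‖x‖ ^ 2 := by
      simpa [hx] using pow_le_pow_left₀ (norm_nonneg _) (PiLp.norm_apply_le x i₀) 2
    have hb : √(‖x‖ ^ 2 - 1) ^ 2 = ‖x‖ ^ 2 - 1 := Real.sq_sqrt (by linarith)
    calc realEval x F
        = realEval (planePt √(‖x‖ ^ 2 - 1)) F := by
          refine hF.realEval_eq hF' ?_ (by rw [hx, hplanePt])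
          rw [← sq_eq_sq₀ (norm_nonneg _) (norm_nonneg _), hnorm, hb]
          ring
      _ = r.eval ((√(‖x‖ ^ 2 - 1) ^ 2 : ℝ) : ℂ) := by
          rw [hp, ← hr, Polynomial.expand_eval, Complex.ofReal_pow]
      _ = _ := by simp [hb]

lemma exists_eq_sum (hi : i₀ ≠ i₁) (hF : IsZonal i₀ F) (hF' : F.IsHomogeneous k) :
    ∃ a : ℕ → ℂ,
      F = ∑ j ∈ Finset.range (k / 2 + 1), a j • (normSqPoly n ^ j * X i₀ ^ (k - 2 * j)) := by
  obtain ⟨q, hq, hqF⟩ := hF.exists_realEval_eq_eval_norm_sq hi hF'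
  refine ⟨q.coeff, mul_right_cancel₀ (X_ne_zero i₀) (eq_of_realEval_eq fun x => ?_)⟩
  obtain hx | hx := eq_or_ne (x i₀) 0
  · simp [hx]
  have hx' : (x i₀ : ℂ) ≠ 0 := mod_cast hx
  rw [map_mul, map_mul]
  congr 1
  calc realEval x F
      = x i₀ ^ k * realEval ((x i₀)⁻¹ • x) F := by
        rw [← realEval_smul hF', smul_inv_smul₀ hx]
    _ = x i₀ ^ k * ∑ j ∈ Finset.range (k / 2 + 1),
          q.coeff j * (((x i₀)⁻¹ ^ 2 * ‖x‖ ^ 2 : ℝ) : ℂ) ^ j := by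
        rw [hqF _ (by simp [hx]), Polynomial.eval_eq_sum_range' (Nat.lt_succ_of_le hq), norm_smul,
          mul_pow, norm_inv, Real.norm_eq_abs, inv_pow, sq_abs, inv_pow]
    _ = realEval x _ := by
        rw [Finset.mul_sum, map_sum]
        refine Finset.sum_congr rfl fun j hj => ?_
        have hjk : 2 * j ≤ k := by grind
        simp only [map_smul, map_mul, map_pow, realEval_X, realEval_normSqPoly, smul_eq_mul]
        rw [pow_sub₀ _ hx' hjk, pow_mul]
        push_cast
        ring

end IsZonal

lemma realEval_polyLaplacian_normSqPoly_pow_mul_X_pow (i₀ : Fin n) (a j : ℕ) (x : 𝕊 n) :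
    realEval (x : 𝔼 n) (polyLaplacian n (normSqPoly n ^ j * X i₀ ^ a)) =
      ((gegenbauerEigenvalue ((n - 3) / 2) (a + 2 * j) • .X ^ a
        - gegenbauerOp ((n - 3) / 2) (.X ^ a) : Polynomial ℝ).eval ((x : 𝔼 n) i₀) : ℝ) := by
  have ha : (X i₀ ^ a : MvPolynomial (Fin n) ℂ).IsHomogeneous a := by
    simpa using (isHomogeneous_X ℂ i₀).pow a
  rw [polyLaplacian_normSqPoly_pow_mul ha, polyLaplacian_X_pow, gegenbauerOp_X_pow]
  simp [gegenbauerEigenvalue]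
  ring

lemma IsZonal.exists_gegenbauerOp_eq_smul {i₀ i₁ : Fin n} {F : MvPolynomial (Fin n) ℂ}
    (hi : i₀ ≠ i₁) (hF : IsZonal i₀ F) (hF' : F ∈ harmSubmodule n k) :
    ∃ P : Polynomial ℝ,
      gegenbauerOp ((n - 3) / 2) P = gegenbauerEigenvalue ((n - 3) / 2) k • P ∧
        ∀ x : 𝕊 n, (realEval (x : 𝔼 n) F).re = P.eval ((x : 𝔼 n) i₀) := by
  rw [mem_harmSubmodule] at hF'
  obtain ⟨a, rfl⟩ := hF.exists_eq_sum hi hF'.1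
  let P : Polynomial ℝ := ∑ j ∈ Finset.range (k / 2 + 1), (a j).re • .X ^ (k - 2 * j)
  let L := gegenbauerOp ((n - 3) / 2)
  let lam := gegenbauerEigenvalue ((n - 3) / 2) k
  refine ⟨P, ?_, fun x => ?_⟩
  · have hsphere (x : 𝕊 n) : (lam • P - L P).eval ((x : 𝔼 n) i₀) = 0 := by
      have hre := congr_arg (fun G => (realEval (x : 𝔼 n) G).re) hF'.2
      simp only [map_sum, map_smul, map_zero, smul_eq_mul, Complex.re_sum, Complex.zero_re,
        realEval_polyLaplacian_normSqPoly_pow_mul_X_pow, Complex.re_mul_ofReal] at hre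
      rw [← hre, Finset.smul_sum, map_sum, ← Finset.sum_sub_distrib, Polynomial.eval_finsetSum]
      refine Finset.sum_congr rfl fun j hj => ?_
      rw [Nat.sub_add_cancel (by grind : 2 * j ≤ k), map_smul, smul_comm, ← smul_sub,
        Polynomial.eval_smul, smul_eq_mul]
    have hzero : lam • P - L P = 0 := by
      refine Polynomial.eq_zero_of_infinite_isRoot _
        ((Set.Icc_infinite (by norm_num : (-1 : ℝ) < 1)).mono fun t ht => ?_)
      obtain ⟨x, rfl⟩ := exists_mem_sphere_apply_eq hi ht
      exact hsphere x
    exact (sub_eq_zero.mp hzero).symm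
  · simp only [map_sum, map_smul, map_mul, map_pow, realEval_normSqPoly, realEval_X,
      norm_eq_of_mem_sphere, P, Polynomial.eval_finsetSum, Complex.re_sum]
    simp [← Complex.ofReal_pow]

lemma exists_eq_eval_inner (hn : 2 ≤ n) {K : 𝕊 n → 𝕊 n → ℂ}
    (hK : ∀ (g : 𝔼 n ≃ₗᵢ[ℝ] 𝔼 n) x y, K (sphereIsometry g x) (sphereIsometry g y) = K x y)
    (hconj : ∀ x y, conj (K x y) = K y x) (hmem : ∀ y, (K · y) ∈ sphereHarm n k) :
    ∃ P : Polynomial ℝ,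
      gegenbauerOp ((n - 3) / 2) P = gegenbauerEigenvalue ((n - 3) / 2) k • P ∧
        ∀ x y : 𝕊 n, K x y = (P.eval ⟪(x : 𝔼 n), (y : 𝔼 n)⟫ : ℝ) := by
  let i₀ : Fin n := ⟨0, by lia⟩
  have hi : i₀ ≠ ⟨1, by lia⟩ := by simp [i₀]
  let pole : 𝕊 n := ⟨EuclideanSpace.single i₀ 1, by simp⟩
  have hinner (x : 𝕊 n) : ⟪(x : 𝔼 n), (pole : 𝔼 n)⟫ = (x : 𝔼 n) i₀ := by
    simp [pole, EuclideanSpace.inner_single_right]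
  obtain ⟨F, hF, hFK⟩ := hmem pole
  replace hFK (x : 𝕊 n) : realEval (x : 𝔼 n) F = K x pole := congr_fun hFK x
  have hzonal : IsZonal i₀ F := fun x y hxy => by
    rw [hFK, hFK]
    exact eq_of_inner_eq hK (by rw [hinner, hinner, hxy])
  obtain ⟨P, hP, hPF⟩ := hzonal.exists_gegenbauerOp_eq_smul hi hF
  have hpole (z : 𝕊 n) : K z pole = (P.eval ⟪(z : 𝔼 n), (pole : 𝔼 n)⟫ : ℝ) := by
    have hreal : conj (K z pole) = K z pole :=
      (hconj z pole).trans (eq_of_inner_eq hK (real_inner_comm _ _))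
    rw [← Complex.conj_eq_iff_re.mp hreal, ← hFK, hPF, hinner]
  refine ⟨P, hP, fun x y => ?_⟩
  let g := (ℝ ∙ ((y : 𝔼 n) - pole))ᗮ.reflection
  have hgy : sphereIsometry g y = pole := sphereIsometry_reflection_sub y pole
  rw [← hK g, hgy, hpole, ← hgy]
  exact congr_arg (fun t => ((P.eval t : ℝ) : ℂ)) (g.inner_map_map _ _)

lemma exists_mem_sphereHarm_apply_ne_zero (hn : 2 ≤ n) (k : ℕ) :
    ∃ f ∈ sphereHarm n k, ∃ x, f x ≠ 0 := by
  let i₀ : Fin n := ⟨0, by lia⟩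
  have hi : i₀ ≠ ⟨1, by lia⟩ := by simp [i₀]
  refine ⟨_, ⟨_, X_add_I_mul_X_pow_mem_harmSubmodule hi k, rfl⟩,
    ⟨EuclideanSpace.single i₀ 1, by simp⟩, ?_⟩
  simp [restrictSphere_apply, realEval, hi.symm]

lemma exists_reproducingKernel_eq_eval_inner {ι : Type*} [Fintype ι] [DecidableEq ι] (hn : 2 ≤ n)
    {d : ℝ} {e : ι → 𝕊 n → ℂ} (he : IsL2Orthonormal μH[d] e)
    (hspan : Submodule.span ℂ (Set.range e) = sphereHarm n k) :
    ∃ P : Polynomial ℝ,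
      gegenbauerOp ((n - 3) / 2) P = gegenbauerEigenvalue ((n - 3) / 2) k • P ∧ 0 < P.eval 1 ∧
        ∀ x y : 𝕊 n, reproducingKernel e x y = (P.eval ⟪(x : 𝔼 n), (y : 𝔼 n)⟫ : ℝ) := by
  obtain ⟨P, hP, hK⟩ := exists_eq_eval_inner hn (reproducingKernel_sphereIsometry he hspan)
    (conj_reproducingKernel e) fun y => hspan ▸ reproducingKernel_mem_span e y
  refine ⟨P, hP, ?_, hK⟩
  obtain ⟨f, hf, x, hfx⟩ := exists_mem_sphereHarm_apply_ne_zero hn k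
  have hdiag : ∑ l, ‖e l x‖ ^ 2 = P.eval 1 := by
    have hKxx := (reproducingKernel_self e x).symm.trans (hK x x)
    rw [real_inner_self_eq_norm_sq, norm_eq_of_mem_sphere, one_pow] at hKxx
    exact Complex.ofReal_injective hKxx
  exact hdiag ▸ sum_norm_sq_pos_of_mem_span (hspan ▸ hf) hfx

end SphericalHarmonics

/-- addition formula: if `e_1, …, e_{h_k}` is an orthonormal basis of
the space `H_k` of spherical harmonics of degree `k` (with respect to the surface
measure on `S^{n-1}`), then there is a constant `α_k > 0` such that
`∑_l e_l(x) conj(e_l(y)) = α_k P_k^{(α,α)}(x·y)` with `α = (n-3)/2`, where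
`P_k^{(α,α)}` is the normalized Jacobi polynomial of degree `k`: the polynomial
with `P(1) = 1`, of degree `k`, orthogonal to all polynomials of lower degree for
the weight `(1-t²)^α` on `[-1,1]`. -/
theorem addition_formula (n k : ℕ) (hn : 2 ≤ n)
    (h : ℕ) (e : Fin h → (Metric.sphere (0 : EuclideanSpace ℝ (Fin n)) 1 → ℂ))
    (he : ∀ l, e l ∈ sphereHarm n k)
    (hspan : Submodule.span ℂ (Set.range e) = sphereHarm n k)
    (hON : ∀ l m : Fin h,
      ∫ p, e l p * conj (e m p) ∂(μH[(n : ℝ) - 1]) = if l = m then 1 else 0) :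
    ∃ (P : Polynomial ℝ) (αk : ℝ),
      P.degree = (k : ℕ) ∧
      P.eval 1 = 1 ∧
      (∀ Q : Polynomial ℝ, Q.degree < (k : ℕ) →
        ∫ t in (-1 : ℝ)..1,
          P.eval t * Q.eval t * (1 - t ^ 2) ^ ((n - 3 : ℝ) / 2) = 0) ∧
      0 < αk ∧
      ∀ x y : Metric.sphere (0 : EuclideanSpace ℝ (Fin n)) 1,
        ∑ l : Fin h, e l x * conj (e l y) =
          ((αk * P.eval ⟪(x : EuclideanSpace ℝ (Fin n)),
              (y : EuclideanSpace ℝ (Fin n))⟫ : ℝ) : ℂ) := by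
  have hα : (-1 : ℝ) < (n - 3) / 2 := by
    have : (2 : ℝ) ≤ n := mod_cast hn
    linarith
  have hortho : IsL2Orthonormal μH[(n : ℝ) - 1] e :=
    ⟨fun l => (continuous_of_mem_sphereHarm (he l)).aestronglyMeasurable, hON⟩
  obtain ⟨P, hP, hpos, hK⟩ := exists_reproducingKernel_eq_eval_inner hn hortho hspan
  let P₁ := (P.eval 1)⁻¹ • P
  have hP₁ : gegenbauerOp ((n - 3) / 2) P₁ = gegenbauerEigenvalue ((n - 3) / 2) k • P₁ := by
    rw [map_smul, hP, smul_comm]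
  have hP₁_one : P₁.eval 1 = 1 := by simp [P₁, hpos.ne']
  have hP₁_ne : P₁ ≠ 0 := by
    intro h₀
    simp [h₀] at hP₁_one
  refine ⟨P₁, P.eval 1, degree_eq_of_gegenbauerOp_eq_smul hα hP₁ hP₁_ne, hP₁_one, fun Q hQ => ?_,
    hpos, fun x y => (hK x y).trans ?_⟩
  · simpa [jacobiIntegral_apply] using jacobiIntegral_mul_eq_zero hα hP₁ hQ
  · simp [P₁, hpos.ne']
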